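/- arXiv:0912.0904 — 2 statements merged into one kernel-verified Lean document; each statement's English description precedes it below -/
import Mathlib

section
/- Let a, b, c be positive integers, k = a + b + c, and λ, μ ∈ ℂ. For t ∈ ℝ let m(t) denote the infimum over z ∈ ℂ of a·|z|² + b·|exp(2πi·a·t)·z − λ|² + c·|exp(2πi·(a+b)·t)·z − exp(2πi·b·t)·λ − μ|². Then ∫₀¹ m(t) dt = (a·(b+c)/k)·|λ|² + (c·(a+b)/k)·|μ|², i.e. equivalently (b+c)·(1 − (b+c)/k)·|λ|² + c·(1 − c/k)·|μ|². -/
open Real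

/-!
With `E = exp(2πi a t)` and `F = exp(2πi b t)` of modulus `1`, the quantity to minimise is
`a|z - 0|² + b|z - E⁻¹λ|² + c|z - E⁻¹(λ + F⁻¹μ)|²`, a weighted sum of squared distances to three
points. Its minimum is attained at their weighted barycentre and equals the sum over pairs of
(product of weights) · (distance)² divided by the total weight, that is
`(ab|λ|² + ac|Fλ + μ|² + bc|μ|²) / k`. Only `|Fλ + μ|²` depends on `t`, and its cross term is a
nontrivial character of `ℝ/ℤ`, so its mean over a period is `|λ|² + |μ|²`.
-/

section WeightedSquaredDistances

variable {ι V : Type*} [SeminormedAddCommGroup V]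

section Real

variable [InnerProductSpace ℝ V] (s : Finset ι) (w : ι → ℝ)

theorem sum_sum_mul_norm_sub_sq (v : ι → V) :
    ∑ i ∈ s, ∑ j ∈ s, w i * w j * ‖v i - v j‖ ^ 2 =
      2 * ((∑ i ∈ s, w i) * ∑ i ∈ s, w i * ‖v i‖ ^ 2 - ‖∑ i ∈ s, w i • v i‖ ^ 2) := by
  have diagonal_left : ∑ i ∈ s, ∑ j ∈ s, w i * w j * ‖v i‖ ^ 2 =
      (∑ i ∈ s, w i) * ∑ i ∈ s, w i * ‖v i‖ ^ 2 := by
    rw [mul_comm, Finset.sum_mul_sum]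
    exact Finset.sum_congr rfl fun i _ => Finset.sum_congr rfl fun j _ => by ring
  have diagonal_right : ∑ i ∈ s, ∑ j ∈ s, w i * w j * ‖v j‖ ^ 2 =
      (∑ i ∈ s, w i) * ∑ i ∈ s, w i * ‖v i‖ ^ 2 := by
    simp only [Finset.sum_mul_sum, mul_assoc]
  have cross : ∑ i ∈ s, ∑ j ∈ s, w i * w j * inner ℝ (v i) (v j) =
      ‖∑ i ∈ s, w i • v i‖ ^ 2 := by
    simp only [← real_inner_self_eq_norm_sq, sum_inner, inner_sum, real_inner_smul_left,
      real_inner_smul_right, mul_assoc]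
    exact Finset.sum_congr rfl fun i _ => Finset.sum_congr rfl fun j _ => by
      rw [real_inner_comm, mul_left_comm]
  have expand (i j : ι) : w i * w j * ‖v i - v j‖ ^ 2 =
      w i * w j * ‖v i‖ ^ 2 + w i * w j * ‖v j‖ ^ 2 - 2 * (w i * w j * inner ℝ (v i) (v j)) := by
    rw [norm_sub_sq_real]
    ring
  simp only [expand, Finset.sum_sub_distrib, Finset.sum_add_distrib, ← Finset.mul_sum,
    diagonal_left, diagonal_right, cross]
  ring

theorem sum_mul_norm_sub_sq_eq_add (p : ι → V) (hw : ∑ i ∈ s, w i ≠ 0) (z : V) :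
    ∑ i ∈ s, w i * ‖z - p i‖ ^ 2 = (∑ i ∈ s, w i) * ‖z - s.centerMass w p‖ ^ 2 +
      (∑ i ∈ s, ∑ j ∈ s, w i * w j * ‖p i - p j‖ ^ 2) / (2 * ∑ i ∈ s, w i) := by
  have weighted_sum : ∑ i ∈ s, w i • (z - p i) = (∑ i ∈ s, w i) • (z - s.centerMass w p) := by
    rw [Finset.centerMass, smul_sub, smul_inv_smul₀ hw, Finset.sum_smul]
    simp only [smul_sub, Finset.sum_sub_distrib]
  have translate (i j : ι) : ‖z - p i - (z - p j)‖ = ‖p i - p j‖ := by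
    rw [sub_sub_sub_cancel_left, norm_sub_rev]
  have pairs := sum_sum_mul_norm_sub_sq s w fun i => z - p i
  simp only [translate, weighted_sum, norm_smul, mul_pow, norm_eq_abs, sq_abs] at pairs
  rw [pairs]
  field_simp
  ring

theorem iInf_sum_mul_norm_sub_sq (p : ι → V) (hw : 0 < ∑ i ∈ s, w i) :
    ⨅ z : V, ∑ i ∈ s, w i * ‖z - p i‖ ^ 2 =
      (∑ i ∈ s, ∑ j ∈ s, w i * w j * ‖p i - p j‖ ^ 2) / (2 * ∑ i ∈ s, w i) := by
  simp only [sum_mul_norm_sub_sq_eq_add s w p hw.ne']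
  refine IsLeast.csInf_eq ⟨⟨s.centerMass w p, by simp⟩, ?_⟩
  rintro _ ⟨z, rfl⟩
  exact le_add_of_nonneg_left (by positivity)

theorem iInf_three_mul_norm_sub_sq {α β γ : ℝ} (hk : 0 < α + β + γ) (p q r : V) :
    ⨅ z : V, (α * ‖z - p‖ ^ 2 + β * ‖z - q‖ ^ 2 + γ * ‖z - r‖ ^ 2) =
      (α * β * ‖p - q‖ ^ 2 + α * γ * ‖p - r‖ ^ 2 + β * γ * ‖q - r‖ ^ 2) / (α + β + γ) := by
  have minimum := iInf_sum_mul_norm_sub_sq Finset.univ ![α, β, γ] ![p, q, r]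
    (by simpa [Fin.sum_univ_three] using hk)
  simp only [Fin.sum_univ_three, Matrix.cons_val, sub_self, norm_zero, norm_sub_rev q p,
    norm_sub_rev r p, norm_sub_rev r q] at minimum
  rw [minimum]
  field_simp
  ring

end Real

theorem iInf_rotated_mul_norm_sub_sq {𝕜 : Type*} [RCLike 𝕜] [InnerProductSpace 𝕜 V]
    {α β γ : ℝ} (hk : 0 < α + β + γ) {E F : 𝕜} (hE : ‖E‖ = 1) (hF : ‖F‖ = 1) (l m : V) :
    ⨅ z : V, (α * ‖z‖ ^ 2 + β * ‖E • z - l‖ ^ 2 + γ * ‖(E * F) • z - F • l - m‖ ^ 2) =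
      (α * β * ‖l‖ ^ 2 + α * γ * ‖F • l + m‖ ^ 2 + β * γ * ‖m‖ ^ 2) / (α + β + γ) := by
  let _ := InnerProductSpace.rclikeToReal 𝕜 V
  have hE₀ : E ≠ 0 := norm_ne_zero_iff.1 (by simp [hE])
  have hF₀ : F ≠ 0 := norm_ne_zero_iff.1 (by simp [hF])
  obtain ⟨q, rfl⟩ : ∃ q, E • q = l := ⟨E⁻¹ • l, smul_inv_smul₀ hE₀ l⟩
  obtain ⟨d, rfl⟩ : ∃ d, (E * F) • d = m :=
    ⟨(E * F)⁻¹ • m, smul_inv_smul₀ (mul_ne_zero hE₀ hF₀) m⟩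
  have norm_E_smul (v : V) : ‖E • v‖ = ‖v‖ := by rw [norm_smul, hE, one_mul]
  have norm_EF_smul (v : V) : ‖(E * F) • v‖ = ‖v‖ := by rw [norm_smul, norm_mul, hE, hF]; simp
  have F_smul_E_smul : F • E • q = (E * F) • q := by rw [smul_smul, mul_comm]
  simpa only [F_smul_E_smul, ← smul_sub, ← smul_add, norm_E_smul, norm_EF_smul, sub_zero,
    zero_sub, norm_neg, sub_sub, sub_add_cancel_left]
    using iInf_three_mul_norm_sub_sq hk 0 q (q + d)

end WeightedSquaredDistances

section PeriodMean

theorem norm_exp_two_pi_I_mul_mul (x t : ℝ) :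
    ‖Complex.exp (2 * π * Complex.I * x * t)‖ = 1 := by
  simp [Complex.norm_exp]

theorem integral_exp_two_pi_I_mul_int_mul {n : ℤ} (hn : n ≠ 0) :
    ∫ t in (0 : ℝ)..1, Complex.exp (2 * π * Complex.I * n * t) = 0 := by
  have frequency_ne_zero : 2 * π * Complex.I * n ≠ 0 :=
    mul_ne_zero Complex.two_pi_I_ne_zero (Int.cast_ne_zero.2 hn)
  have period : Complex.exp (2 * π * Complex.I * n) = 1 := by
    rw [mul_comm, Complex.exp_int_mul_two_pi_mul_I]
  simp [integral_exp_mul_complex frequency_ne_zero, period]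

theorem integral_norm_exp_two_pi_I_smul_add_sq {V : Type*} [SeminormedAddCommGroup V]
    [InnerProductSpace ℂ V] {n : ℤ} (hn : n ≠ 0) (l m : V) :
    ∫ t in (0 : ℝ)..1, ‖Complex.exp (2 * π * Complex.I * n * t) • l + m‖ ^ 2 =
      ‖l‖ ^ 2 + ‖m‖ ^ 2 := by
  have expand (t : ℝ) : ‖Complex.exp (2 * π * Complex.I * n * t) • l + m‖ ^ 2 =
      ‖l‖ ^ 2 + ‖m‖ ^ 2 +
        2 * (Complex.exp (2 * π * Complex.I * n * t) * inner ℂ m l).re := by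
    have unit : ‖Complex.exp (2 * π * Complex.I * n * t)‖ = 1 :=
      mod_cast norm_exp_two_pi_I_mul_mul n t
    rw [add_comm, norm_add_sq (𝕜 := ℂ), inner_smul_right, norm_smul, unit, RCLike.re_to_complex]
    ring
  have cross : ∫ t in (0 : ℝ)..1,
      (Complex.exp (2 * π * Complex.I * n * t) * inner ℂ m l).re = 0 := by
    have integral_re := intervalIntegral.intervalIntegral_re (𝕜 := ℂ) (μ := MeasureTheory.volume)
      (a := 0) (b := 1) (f := fun t : ℝ => Complex.exp (2 * π * Complex.I * n * t) * inner ℂ m l)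
      (Continuous.intervalIntegrable (by fun_prop) _ _)
    simpa [integral_exp_two_pi_I_mul_int_mul hn] using integral_re
  simp only [expand]
  rw [intervalIntegral.integral_add (Continuous.intervalIntegrable (by fun_prop) _ _)
      (Continuous.intervalIntegrable (by fun_prop) _ _),
    intervalIntegral.integral_const_mul, cross]
  simp

end PeriodMean

theorem stmt_14_general {V : Type*} [SeminormedAddCommGroup V] [InnerProductSpace ℂ V]
    {α β γ : ℝ} (hk : 0 < α + β + γ) (x : ℝ) {n : ℤ} (hn : n ≠ 0) (l m : V) :
    (∫ t in (0 : ℝ)..1, ⨅ z : V,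
      (α * ‖z‖ ^ 2 + β * ‖Complex.exp (2 * π * Complex.I * x * t) • z - l‖ ^ 2 +
        γ * ‖Complex.exp (2 * π * Complex.I * (x + n) * t) • z -
          Complex.exp (2 * π * Complex.I * n * t) • l - m‖ ^ 2)) =
      α * (β + γ) / (α + β + γ) * ‖l‖ ^ 2 + γ * (α + β) / (α + β + γ) * ‖m‖ ^ 2 ∧
    α * (β + γ) / (α + β + γ) * ‖l‖ ^ 2 + γ * (α + β) / (α + β + γ) * ‖m‖ ^ 2 =
      (β + γ) * (1 - (β + γ) / (α + β + γ)) * ‖l‖ ^ 2 +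
        γ * (1 - γ / (α + β + γ)) * ‖m‖ ^ 2 := by
  refine ⟨?_, by field_simp; ring⟩
  have unit (t : ℝ) : ‖Complex.exp (2 * π * Complex.I * n * t)‖ = 1 :=
    mod_cast norm_exp_two_pi_I_mul_mul n t
  have minimum (t : ℝ) :=
    iInf_rotated_mul_norm_sub_sq hk (norm_exp_two_pi_I_mul_mul x t) (unit t) l m
  have affine (t : ℝ) : (α * β * ‖l‖ ^ 2 +
      α * γ * ‖Complex.exp (2 * π * Complex.I * n * t) • l + m‖ ^ 2 + β * γ * ‖m‖ ^ 2) /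
        (α + β + γ) = (α * β * ‖l‖ ^ 2 + β * γ * ‖m‖ ^ 2) / (α + β + γ) +
      α * γ / (α + β + γ) * ‖Complex.exp (2 * π * Complex.I * n * t) • l + m‖ ^ 2 := by
    ring
  simp only [mul_add, add_mul, Complex.exp_add, minimum, affine]
  rw [intervalIntegral.integral_add (Continuous.intervalIntegrable (by fun_prop) _ _)
      (Continuous.intervalIntegrable (by fun_prop) _ _),
    intervalIntegral.integral_const_mul, integral_norm_exp_two_pi_I_smul_add_sq hn,
    intervalIntegral.integral_const, sub_zero, one_smul]
  field_simp
  ring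

/-- with `a, b, c` positive integers, `k = a + b + c` and `λ, μ ∈ ℂ`, letting
`m t` be the infimum over `z ∈ ℂ` of
`a|z|² + b|exp(2πi a t) z − λ|² + c|exp(2πi(a+b)t) z − exp(2πi b t) λ − μ|²`, one has
`∫₀¹ m t dt = (a(b+c)/k)|λ|² + (c(a+b)/k)|μ|²`, equivalently
`(b+c)(1 − (b+c)/k)|λ|² + c(1 − c/k)|μ|²`. -/
theorem stmt_14 (a b c : ℕ) (ha : 0 < a) (hb : 0 < b) (hc : 0 < c) (lam mu : ℂ)
    (m : ℝ → ℝ)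
    (hm : ∀ t : ℝ, m t = ⨅ z : ℂ,
      ((a : ℝ) * ‖z‖ ^ 2 +
        (b : ℝ) * ‖Complex.exp ((2 * (π : ℂ) * Complex.I) * (a : ℂ) * (t : ℂ)) * z - lam‖ ^ 2 +
        (c : ℝ) * ‖Complex.exp ((2 * (π : ℂ) * Complex.I) * ((a : ℂ) + (b : ℂ)) * (t : ℂ)) * z -
          Complex.exp ((2 * (π : ℂ) * Complex.I) * (b : ℂ) * (t : ℂ)) * lam - mu‖ ^ 2)) :
    (∫ t in (0 : ℝ)..1, m t) =
      (a : ℝ) * ((b : ℝ) + (c : ℝ)) / ((a : ℝ) + (b : ℝ) + (c : ℝ)) * ‖lam‖ ^ 2 +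
        (c : ℝ) * ((a : ℝ) + (b : ℝ)) / ((a : ℝ) + (b : ℝ) + (c : ℝ)) * ‖mu‖ ^ 2 ∧
    (a : ℝ) * ((b : ℝ) + (c : ℝ)) / ((a : ℝ) + (b : ℝ) + (c : ℝ)) * ‖lam‖ ^ 2 +
        (c : ℝ) * ((a : ℝ) + (b : ℝ)) / ((a : ℝ) + (b : ℝ) + (c : ℝ)) * ‖mu‖ ^ 2 =
      ((b : ℝ) + (c : ℝ)) * (1 - ((b : ℝ) + (c : ℝ)) / ((a : ℝ) + (b : ℝ) + (c : ℝ))) * ‖lam‖ ^ 2 +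
        (c : ℝ) * (1 - (c : ℝ) / ((a : ℝ) + (b : ℝ) + (c : ℝ))) * ‖mu‖ ^ 2 := by
  have hk : (0 : ℝ) < a + b + c := by positivity
  simp only [hm]
  exact_mod_cast stmt_14_general hk a (Int.natCast_ne_zero.2 hb.ne') lam mu
end

section
/- Let k ≥ 2 be an integer. For λ = (λ₁, …, λ_{k−1}) ∈ ℂ^{k−1}, t ∈ ℝ and z ∈ ℂ define w₀(t, λ, z) = z and w_m(t, λ, z) = exp(2πi·t)·w_{m−1}(t, λ, z) − λ_{k−m} for 1 ≤ m ≤ k−1, and set Q(t, λ, z) = Σ_{m=0}^{k−1} |w_m(t, λ, z)|². Define Φ : ℂ^{k−1} → ℝ by Φ(λ) = ∫₀¹ (inf over z ∈ ℂ of Q(t, λ, z)) dt. Then: (i) Φ is infinitely differentiable (as a function on ℂ^{k−1} ≅ ℝ^{2(k−1)}); (ii) Φ(0) = 0 and Φ(λ) ≥ 0 for all λ; (iii) the second derivative (Hessian) of Φ at the origin is the quadratic form v ↦ 2·Σ_{j=1}^{k−1} (j·(k−j)/k)·|v_j|², and in particular it is positive definite. -/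
open Real

/-- `wseq k λ t z m = w_m(t, λ, z)`, where `w₀(t,λ,z) = z` and
`w_m(t,λ,z) = exp(2πi t) w_{m−1}(t,λ,z) − λ_{k−m}` (here `λ_j = lam ⟨j − 1, _⟩`). -/
noncomputable def wseq (k : ℕ) (lam : Fin (k - 1) → ℂ) (t : ℝ) (z : ℂ) : ℕ → ℂ
  | 0 => z
  | m + 1 => Complex.exp ((2 * (π : ℂ) * Complex.I) * (t : ℂ)) * wseq k lam t z m -
      if h : k - (m + 1) - 1 < k - 1 then lam ⟨k - (m + 1) - 1, h⟩ else 0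

/-- `Q(t, λ, z) = Σ_{m=0}^{k−1} |w_m(t, λ, z)|²`. -/
noncomputable def Q (k : ℕ) (t : ℝ) (lam : Fin (k - 1) → ℂ) (z : ℂ) : ℝ :=
  ∑ m ∈ Finset.range k, ‖wseq k lam t z m‖ ^ 2

/-- `Φ(λ) = ∫₀¹ (inf over z ∈ ℂ of Q(t, λ, z)) dt`. -/
noncomputable def Phi (k : ℕ) (lam : Fin (k - 1) → ℂ) : ℝ :=
  ∫ t in (0 : ℝ)..1, ⨅ z : ℂ, Q k t lam z

/-!
Multiplication by `exp(2πi t)` is an isometry, so `|w_m| = |z - a_m(t)|`, where `a_m` is a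
trigonometric polynomial in `t` whose coefficients are the last `m` entries of `λ`. Minimizing over
`z` puts `z` at the mean of the `a_m` and leaves the variance `∑ |a_m|² - |∑ a_m|² / k`. Integrating
over a period, Parseval's identity removes all cross terms: `|λ_j|²` occurs in `j` of the `|a_m|²`,
and `λ_j` enters `∑ a_m` with multiplicity `j`, so its total weight is `j - j² / k = j (k - j) / k`.
Thus `Φ` is itself a positive definite quadratic form, hence equal to half its Hessian.
-/

section MeanSquare

variable {ι E : Type*} [NormedAddCommGroup E] [InnerProductSpace ℝ E]

theorem sum_norm_sub_sq_eq_card_mul_add (s : Finset ι) (a : ι → E) (z : E) :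
    ∑ i ∈ s, ‖z - a i‖ ^ 2 =
      s.card * ‖z - (s.card : ℝ)⁻¹ • ∑ i ∈ s, a i‖ ^ 2 +
        (∑ i ∈ s, ‖a i‖ ^ 2 - ‖∑ i ∈ s, a i‖ ^ 2 / s.card) := by
  rcases s.eq_empty_or_nonempty with rfl | hs
  · simp
  have hcard : (s.card : ℝ) ≠ 0 := by exact_mod_cast hs.card_ne_zero
  simp only [norm_sub_sq_real, Finset.sum_add_distrib, Finset.sum_sub_distrib, Finset.sum_const,
    ← Finset.mul_sum, ← inner_sum, real_inner_smul_right, norm_smul, norm_inv, Real.norm_natCast,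
    nsmul_eq_mul]
  field_simp
  ring

theorem iInf_sum_norm_sub_sq (s : Finset ι) (a : ι → E) :
    ⨅ z, ∑ i ∈ s, ‖z - a i‖ ^ 2 = ∑ i ∈ s, ‖a i‖ ^ 2 - ‖∑ i ∈ s, a i‖ ^ 2 / s.card := by
  have hmin : IsLeast (Set.range fun z ↦ ∑ i ∈ s, ‖z - a i‖ ^ 2)
      (∑ i ∈ s, ‖a i‖ ^ 2 - ‖∑ i ∈ s, a i‖ ^ 2 / s.card) := by
    simp only [sum_norm_sub_sq_eq_card_mul_add]
    refine ⟨⟨(s.card : ℝ)⁻¹ • ∑ i ∈ s, a i, by simp⟩, ?_⟩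
    rintro _ ⟨z, rfl⟩
    exact le_add_of_nonneg_left (by positivity)
  exact hmin.csInf_eq

end MeanSquare

section Parseval

variable {ι : Type*} {n : ι → ℤ} {T : ℝ} [hT : Fact (0 < T)]

theorem integral_norm_sum_mul_fourier_sq (hn : Function.Injective n)
    (s : Finset ι) (c : ι → ℂ) :
    ∫ x : AddCircle T, ‖∑ i ∈ s, c i * fourier (n i) x‖ ^ 2 ∂AddCircle.haarAddCircle =
      ∑ i ∈ s, ‖c i‖ ^ 2 := by
  let f : C(AddCircle T, ℂ) := ∑ i ∈ s, c i • fourier (n i)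
  have hf : ContinuousMap.toLp 2 AddCircle.haarAddCircle ℂ f =
      ∑ i ∈ s, c i • fourierLp 2 (n i) := by
    simp only [f, map_sum, map_smul, fourierLp]
  have hinner := (orthonormal_fourier (T := T)).comp n hn |>.inner_sum c c s
  simp only [Function.comp_apply, ← hf, MeasureTheory.ContinuousMap.inner_toLp] at hinner
  apply Complex.ofReal_injective
  rw [← integral_complex_ofReal]
  simpa only [f, Complex.mul_conj', Complex.conj_mul', ContinuousMap.sum_apply,
    ContinuousMap.smul_apply, smul_eq_mul, Complex.ofReal_pow, Complex.ofReal_sum] using hinner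

theorem intervalIntegral_norm_sum_mul_fourier_sq (hn : Function.Injective n)
    (s : Finset ι) (c : ι → ℂ) :
    ∫ t in (0 : ℝ)..T, ‖∑ i ∈ s, c i * fourier (n i) (t : AddCircle T)‖ ^ 2 =
      T * ∑ i ∈ s, ‖c i‖ ^ 2 := by
  have hlift := AddCircle.intervalIntegral_preimage T 0
    fun x ↦ ‖∑ i ∈ s, c i * fourier (n i) x‖ ^ 2
  rw [zero_add] at hlift
  rw [hlift, ← integral_norm_sum_mul_fourier_sq (T := T) hn, AddCircle.integral_haarAddCircle,
    smul_eq_mul, mul_inv_cancel_left₀ hT.out.ne']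

end Parseval

theorem iteratedFDeriv_two_bilinear_diag {𝕜 E F : Type*} [NontriviallyNormedField 𝕜]
    [NormedAddCommGroup E] [NormedSpace 𝕜 E] [NormedAddCommGroup F] [NormedSpace 𝕜 F]
    (B : E →L[𝕜] E →L[𝕜] F) (x : E) (v : Fin 2 → E) :
    iteratedFDeriv 𝕜 2 (fun y ↦ B y y) x v = B (v 0) (v 1) + B (v 1) (v 0) := by
  have hderiv : fderiv 𝕜 (fun y ↦ B y y) = ⇑(B + B.flip) := by
    ext y w
    rw [B.fderiv_of_bilinear differentiableAt_fun_id differentiableAt_fun_id]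
    simp
  rw [iteratedFDeriv_two_apply, hderiv, ContinuousLinearMap.fderiv]
  rfl

section WeightedInner

variable {ι : Type*} (E : Type*) [Fintype ι] [NormedAddCommGroup E] [InnerProductSpace ℝ E]

/-- The diagonal bilinear form `(v, w) ↦ ∑ i, c i * ⟪v i, w i⟫` on `ι → E`, with real weights `c`.
It is continuous for the sup norm that `ι → E` carries. -/
noncomputable def weightedInner (c : ι → ℝ) : (ι → E) →L[ℝ] (ι → E) →L[ℝ] ℝ :=
  ∑ i, c i • (innerSL ℝ).bilinearComp (ContinuousLinearMap.proj i) (ContinuousLinearMap.proj i)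

variable {E}

theorem weightedInner_self (c : ι → ℝ) (v : ι → E) :
    weightedInner E c v v = ∑ i, c i * ‖v i‖ ^ 2 := by
  simp [weightedInner]

theorem weightedInner_self_nonneg {c : ι → ℝ} (hc : ∀ i, 0 ≤ c i) (v : ι → E) :
    0 ≤ weightedInner E c v v := by
  rw [weightedInner_self]
  exact Finset.sum_nonneg fun i _ ↦ mul_nonneg (hc i) (sq_nonneg _)

theorem weightedInner_self_pos {c : ι → ℝ} (hc : ∀ i, 0 < c i) {v : ι → E} (hv : v ≠ 0) :
    0 < weightedInner E c v v := by
  obtain ⟨i, hi⟩ := Function.ne_iff.mp hv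
  rw [weightedInner_self]
  exact Finset.sum_pos' (fun i _ ↦ mul_nonneg (hc i).le (sq_nonneg _))
    ⟨i, Finset.mem_univ i, mul_pos (hc i) (pow_pos (norm_pos_iff.mpr hi) 2)⟩

end WeightedInner

section Recursion

variable (k : ℕ) (lam : Fin (k - 1) → ℂ) (t : ℝ)

/-- The point `a_m(t)` with `w_m(t, λ, z) = exp(2πi m t) (z - a_m(t))` for `m < k`, that is
`a_m(t) = ∑_{j = k - m}^{k - 1} λ_j exp(2πi (j - k) t)`. -/
noncomputable def wseqCenter (m : ℕ) : ℂ :=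
  ∑ j : Fin (k - 1) with k ≤ m + (j.val + 1),
    lam j * fourier ((j.val + 1 : ℤ) - k) (t : UnitAddCircle)

variable {k} in
theorem wseqCenter_succ {m : ℕ} (hm : m + 1 < k) :
    wseqCenter k lam t (m + 1) = wseqCenter k lam t m +
      lam ⟨k - (m + 1) - 1, by omega⟩ * fourier (-(m + 1 : ℤ)) (t : UnitAddCircle) := by
  let new : Fin (k - 1) := ⟨k - (m + 1) - 1, by omega⟩
  have hfilter : (Finset.univ.filter fun j : Fin (k - 1) ↦ k ≤ m + 1 + (j.val + 1)) =
      insert new (Finset.univ.filter fun j ↦ k ≤ m + (j.val + 1)) := by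
    ext j
    simp only [Finset.mem_filter_univ, Finset.mem_insert, new, Fin.ext_iff]
    omega
  have hnew : new ∉ Finset.univ.filter fun j : Fin (k - 1) ↦ k ≤ m + (j.val + 1) := by
    simp only [Finset.mem_filter_univ, new]
    omega
  have hfreq : (new.val + 1 : ℤ) - k = -(m + 1) := by
    simp only [new]
    omega
  rw [wseqCenter, hfilter, Finset.sum_insert hnew, hfreq, add_comm, wseqCenter]

variable {k} in
theorem wseq_eq_fourier_mul_sub {m : ℕ} (hm : m < k) (z : ℂ) :
    wseq k lam t z m = fourier m (t : UnitAddCircle) * (z - wseqCenter k lam t m) := by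
  induction m with
  | zero =>
    have hempty : ∀ j : Fin (k - 1), ¬ k ≤ 0 + (j.val + 1) := fun j ↦ by omega
    simp only [wseq, wseqCenter, hempty, Finset.filter_false, Finset.sum_empty, Nat.cast_zero,
      fourier_zero, one_mul, sub_zero]
  | succ m ih =>
    have hexp : Complex.exp (2 * (π : ℂ) * Complex.I * t) = fourier 1 (t : UnitAddCircle) := by
      rw [fourier_coe_apply, Int.cast_one, mul_one, Complex.ofReal_one, div_one]
    have hcancel : fourier (m + 1 : ℤ) (t : UnitAddCircle) *
        fourier (-(m + 1 : ℤ)) (t : UnitAddCircle) = 1 := by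
      rw [← fourier_add, add_neg_cancel, fourier_zero]
    rw [wseq, dif_pos (by omega), ih (by omega), wseqCenter_succ lam t hm, hexp]
    push_cast
    rw [fourier_add] at hcancel ⊢
    linear_combination lam ⟨k - (m + 1) - 1, by omega⟩ * hcancel

theorem Q_eq_sum_norm_sub_wseqCenter_sq (z : ℂ) :
    Q k t lam z = ∑ m ∈ Finset.range k, ‖z - wseqCenter k lam t m‖ ^ 2 := by
  refine Finset.sum_congr rfl fun m hm ↦ ?_
  have hunit : ‖fourier m (t : UnitAddCircle)‖ = 1 := Circle.norm_coe _
  rw [wseq_eq_fourier_mul_sub lam t (Finset.mem_range.mp hm), norm_mul, hunit, one_mul]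

variable {k} in
theorem sum_range_sum_filter_le_add {M : Type*} [AddCommMonoid M] (f : Fin (k - 1) → M) :
    ∑ m ∈ Finset.range k, ∑ j with k ≤ m + (j.val + 1), f j = ∑ j, (j.val + 1) • f j := by
  rw [Finset.sum_comm' (t' := Finset.univ) (s' := fun j ↦ Finset.Ico (k - (j.val + 1)) k)]
  · refine Finset.sum_congr rfl fun j _ ↦ ?_
    rw [Finset.sum_const, Nat.card_Ico, Nat.sub_sub_self (by omega)]
  · intro m j
    simp only [Finset.mem_range, Finset.mem_filter_univ, Finset.mem_Ico, Finset.mem_univ,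
      and_true]
    omega

theorem sum_wseqCenter :
    ∑ m ∈ Finset.range k, wseqCenter k lam t m =
      ∑ j : Fin (k - 1), ((j.val + 1 : ℕ) * lam j) *
        fourier ((j.val + 1 : ℤ) - k) (t : UnitAddCircle) := by
  simp only [wseqCenter, sum_range_sum_filter_le_add, nsmul_eq_mul, mul_assoc]

theorem iInf_Q :
    ⨅ z, Q k t lam z = ∑ m ∈ Finset.range k, ‖wseqCenter k lam t m‖ ^ 2 -
      ‖∑ m ∈ Finset.range k, wseqCenter k lam t m‖ ^ 2 / k := by
  simp only [Q_eq_sum_norm_sub_wseqCenter_sq, iInf_sum_norm_sub_sq, Finset.card_range]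

end Recursion

section Phi

variable (k : ℕ)

/-- The weight `j (k - j) / k` of `|λ_j|²` in `Φ(λ)`; the index `j` of the paper is `j.val + 1`. -/
noncomputable def phiWeight (j : Fin (k - 1)) : ℝ :=
  (j.val + 1 : ℝ) * ((k : ℝ) - (j.val + 1 : ℝ)) / (k : ℝ)

variable {k} in
theorem phiWeight_pos (j : Fin (k - 1)) : 0 < phiWeight k j := by
  have hj : (j.val + 1 : ℝ) < k := by exact_mod_cast (by omega : j.val + 1 < k)
  have hj' : (0 : ℝ) < j.val + 1 := by positivity
  exact div_pos (mul_pos hj' (sub_pos.mpr hj)) (hj'.trans hj)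

variable (lam : Fin (k - 1) → ℂ)

theorem continuous_wseqCenter (m : ℕ) : Continuous fun t ↦ wseqCenter k lam t m := by
  unfold wseqCenter
  fun_prop

theorem frequency_injective :
    Function.Injective fun j : Fin (k - 1) ↦ (j.val + 1 : ℤ) - k := by
  intro i j hij
  ext
  simpa using hij

theorem integral_sum_norm_wseqCenter_sq :
    ∫ t in (0 : ℝ)..1, ∑ m ∈ Finset.range k, ‖wseqCenter k lam t m‖ ^ 2 =
      ∑ j : Fin (k - 1), (j.val + 1 : ℝ) * ‖lam j‖ ^ 2 := by
  have hcont := continuous_wseqCenter k lam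
  rw [intervalIntegral.integral_finsetSum fun m _ ↦
    Continuous.intervalIntegrable (by fun_prop) _ _]
  simp only [wseqCenter, intervalIntegral_norm_sum_mul_fourier_sq (frequency_injective k),
    one_mul, sum_range_sum_filter_le_add, nsmul_eq_mul, Nat.cast_add_one]

theorem integral_norm_sum_wseqCenter_sq :
    ∫ t in (0 : ℝ)..1, ‖∑ m ∈ Finset.range k, wseqCenter k lam t m‖ ^ 2 =
      ∑ j : Fin (k - 1), (j.val + 1 : ℝ) ^ 2 * ‖lam j‖ ^ 2 := by
  simp only [sum_wseqCenter, intervalIntegral_norm_sum_mul_fourier_sq (frequency_injective k),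
    one_mul, norm_mul, mul_pow, Complex.norm_natCast]
  simp only [Nat.cast_add_one]

theorem Phi_eq_weightedInner : Phi k lam = weightedInner ℂ (phiWeight k) lam lam := by
  have hcont := continuous_wseqCenter k lam
  simp only [Phi, iInf_Q]
  rw [intervalIntegral.integral_sub (Continuous.intervalIntegrable (by fun_prop) _ _)
      (Continuous.intervalIntegrable (by fun_prop) _ _),
    intervalIntegral.integral_div, integral_sum_norm_wseqCenter_sq,
    integral_norm_sum_wseqCenter_sq, weightedInner_self, Finset.sum_div, ← Finset.sum_sub_distrib]
  refine Finset.sum_congr rfl fun j _ ↦ ?_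
  have hk : (k : ℝ) ≠ 0 := Nat.cast_ne_zero.mpr (by have := j.pos; omega)
  rw [phiWeight]
  field_simp

theorem iteratedFDeriv_two_Phi (v : Fin (k - 1) → ℂ) :
    iteratedFDeriv ℝ 2 (Phi k) lam ![v, v] = 2 * weightedInner ℂ (phiWeight k) v v := by
  rw [funext (Phi_eq_weightedInner k), iteratedFDeriv_two_bilinear_diag]
  exact (two_mul _).symm

end Phi

/-- for `k ≥ 2`: (i) `Φ` is infinitely differentiable on `ℂ^{k−1} ≅ ℝ^{2(k−1)}`;
(ii) `Φ(0) = 0` and `Φ ≥ 0`; (iii) the Hessian of `Φ` at the origin is the quadratic form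
`v ↦ 2 Σ_{j=1}^{k−1} (j(k−j)/k)|v_j|²`, and in particular it is positive definite. -/
theorem stmt_15 (k : ℕ) (hk : 2 ≤ k) :
    ContDiff ℝ (⊤ : ℕ∞) (Phi k) ∧
    Phi k 0 = 0 ∧ (∀ lam : Fin (k - 1) → ℂ, 0 ≤ Phi k lam) ∧
    (∀ v : Fin (k - 1) → ℂ,
      iteratedFDeriv ℝ 2 (Phi k) 0 ![v, v] =
        2 * ∑ j : Fin (k - 1),
          ((j.val + 1 : ℝ) * ((k : ℝ) - (j.val + 1 : ℝ)) / (k : ℝ)) * ‖v j‖ ^ 2) ∧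
    (∀ v : Fin (k - 1) → ℂ, v ≠ 0 → 0 < iteratedFDeriv ℝ 2 (Phi k) 0 ![v, v]) := by
  have hPhi : Phi k = fun lam ↦ weightedInner ℂ (phiWeight k) lam lam :=
    funext (Phi_eq_weightedInner k)
  refine ⟨?smooth, ?zero, fun lam ↦ ?nonneg, fun v ↦ ?hessian, fun v hv ↦ ?posDef⟩
  case smooth => rw [hPhi]; fun_prop
  case zero => simp [hPhi]
  case nonneg => exact hPhi ▸ weightedInner_self_nonneg (fun j ↦ (phiWeight_pos j).le) lam
  case hessian => rw [iteratedFDeriv_two_Phi, weightedInner_self]; rfl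
  case posDef =>
    rw [iteratedFDeriv_two_Phi]
    exact mul_pos two_pos (weightedInner_self_pos phiWeight_pos hv)
end
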